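/- Let G be a bipartite graph and K a field. The analytic spread of the cover ideal equals the graphical dimension: ℓ(J(G)) = gdim(G), where ℓ(J(G)) is the Krull dimension of the ordinary fiber cone R(J(G))/mR(J(G)) of J(G). -/

import Mathlib

set_option synthInstance.maxHeartbeats 1000000
set_option maxHeartbeats 1000000

open MvPolynomial

/-- The cover ideal `J(G) = ⋂_{{i,j} ∈ E} (x_i, x_j)`. -/
noncomputable def coverIdeal (K : Type*) [Field K] {n : ℕ} (G : SimpleGraph (Fin n)) :
    Ideal (MvPolynomial (Fin n) K) :=
  ⨅ e ∈ G.edgeSet, Ideal.span (MvPolynomial.X '' {v : Fin n | v ∈ e})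

/-- The ideal `m·R(J(G))` of the ordinary Rees algebra `R(J(G)) = ⊕_k J(G)^k t^k`,
generated by the variables `x_i = x_i t^0`. -/
noncomputable def reesIrrelevantIdeal (K : Type*) [Field K] {n : ℕ}
    (G : SimpleGraph (Fin n)) : Ideal (reesAlgebra (coverIdeal K G)) :=
  Ideal.span {a : reesAlgebra (coverIdeal K G) |
    ∃ i : Fin n, (a : Polynomial (MvPolynomial (Fin n) K)) = Polynomial.C (MvPolynomial.X i)}

/-- The ordinary fiber cone `R(J(G)) / m·R(J(G))` of the cover ideal; its Krull dimension is
the analytic spread `ℓ(J(G))`. -/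
noncomputable def ordinaryFiberCone (K : Type*) [Field K] {n : ℕ}
    (G : SimpleGraph (Fin n)) : Type _ :=
  reesAlgebra (coverIdeal K G) ⧸ reesIrrelevantIdeal K G

noncomputable instance (K : Type*) [Field K] {n : ℕ} (G : SimpleGraph (Fin n)) :
    CommRing (ordinaryFiberCone K G) :=
  Ideal.Quotient.commRing (reesIrrelevantIdeal K G)

/-- A free parameter pair. -/
def IsFreeParameterPair {n r : ℕ} (G : SimpleGraph (Fin n)) (a b : Fin r → Fin n) : Prop :=
  Function.Injective a ∧ Function.Injective b ∧
  (∀ i j : Fin r, ¬ G.Adj (a i) (a j)) ∧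
  (∀ i j : Fin r, a i ≠ b j) ∧
  (∀ i : Fin r, G.Adj (a i) (b i)) ∧
  (∀ i j : Fin r, G.Adj (a i) (b j) → i ≤ j)

/-- `G` has a free parameter set of cardinality `r`. -/
def HasFreeParameterSet {n : ℕ} (G : SimpleGraph (Fin n)) (r : ℕ) : Prop :=
  ∃ a b : Fin r → Fin n, IsFreeParameterPair G a b

/-- The graphical dimension. -/
noncomputable def gdim {n : ℕ} (G : SimpleGraph (Fin n)) : ℕ :=
  sSup {r : ℕ | HasFreeParameterSet G r} + 1

/-!
The monomials of `R(J(G))` are the `x^m t^k` with `m` a `k`-cover of `G`, because in a bipartite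
graph every `k`-cover is a sum of `k` vertex covers; such a monomial lies in `m R(J(G))` exactly
when `m` is not a minimal `k`-cover. Hence a product of generators `x^c t` is nonzero in the fiber
cone if and only if the vertex covers `c` form a tight family: each vertex they use has a neighbour
contained in precisely the covers that avoid it.

For a prime `P ⊇ m R(J(G))` the generators outside `P` form a tight family. Each exponent on one
side `A` of the bipartition is complementary to the exponent at a neighbour, so a monomial in these
generators is determined by its degree and its exponents on `A`. Choosing one vertex of `A` for
each incidence pattern with the family yields a free parameter set with `r` elements, so at most
`r + 1` numbers determine the monomial and the quotient by `P` has dimension at most `r + 1`.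

Conversely, a free parameter set can be moved into `A`, and the initial segments
`∅ = Y₀ ⊂ ⋯ ⊂ Y_r` of its partner set give a tight family of `r + 1` vertex covers
`N(Y) ∪ N(A ∖ N(Y))`, where the `p`-th free parameter lies in the covers from `Y_p` on. By this
triangular shape distinct products of the generators are distinct minimal monomials, so the
generators are algebraically independent in the fiber cone.
-/

section KrullDimension

theorem ringKrullDim_le_of_isIntegral (R S : Type*) [CommRing R] [CommRing S] [Algebra R S]
    [Algebra.IsIntegral R S] : ringKrullDim S ≤ ringKrullDim R :=
  Order.krullDim_le_of_strictMono (PrimeSpectrum.comap (algebraMap R S)) fun P Q hPQ =>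
    Ideal.IsIntegral.comap_lt_comap (I := P.asIdeal) (J := Q.asIdeal) hPQ

theorem ringKrullDim_eq_of_isIntegral (R S : Type*) [CommRing R] [CommRing S] [Algebra R S]
    [Algebra.IsIntegral R S] [FaithfulSMul R S] : ringKrullDim S = ringKrullDim R := by
  refine le_antisymm (ringKrullDim_le_of_isIntegral R S) (iSup_le fun l => ?_)
  obtain ⟨P, -, hP, hPl⟩ := Ideal.exists_ideal_over_prime_of_isIntegral (S := S) l.head.asIdeal ⊥
    (by
      rw [Ideal.comap_bot_of_injective _ (FaithfulSMul.algebraMap_injective R S)]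
      exact bot_le)
  have : P.LiesOver l.head.asIdeal := ⟨hPl.symm⟩
  obtain ⟨L, hL, -⟩ := Ideal.exists_ltSeries_of_hasGoingUp l P
  exact hL ▸ Order.LTSeries.length_le_krullDim L

theorem ringKrullDim_quotient_le_of_forall_isPrime {R : Type*} [CommRing R] {I : Ideal R}
    {d : WithBot ℕ∞} (h : ∀ P : Ideal R, P.IsPrime → I ≤ P → ringKrullDim (R ⧸ P) ≤ d) :
    ringKrullDim (R ⧸ I) ≤ d := by
  rw [ringKrullDim_quotient]
  refine iSup_le fun p => le_trans ?_ (h p.head.1.asIdeal p.head.1.isPrime p.head.2)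
  rw [ringKrullDim_quotient]
  let q : LTSeries (PrimeSpectrum.zeroLocus (R := R) p.head.1.asIdeal) :=
    { length := p.length
      toFun i := ⟨(p i).1, LTSeries.head_le p i⟩
      step i := p.step i }
  exact Order.LTSeries.length_le_krullDim q

theorem ringKrullDim_eq_trdeg (K B : Type*) [Field K] [CommRing B] [IsDomain B] [Algebra K B]
    [Algebra.FiniteType K B] :
    ringKrullDim B = (Cardinal.toENat (Algebra.trdeg K B) : WithBot ℕ∞) := by
  obtain ⟨s, g, hinj, hint⟩ := exists_integral_inj_algHom_of_fg K B
  algebraize [g.toRingHom]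
  have : FaithfulSMul (MvPolynomial (Fin s) K) B :=
    (faithfulSMul_iff_algebraMap_injective _ _).2 hinj
  have htrdeg : Algebra.trdeg K B = s := by
    have h := lift_trdeg_add_eq K (MvPolynomial (Fin s) K) B
    rw [MvPolynomial.trdeg_of_isDomain, trdeg_eq_zero] at h
    simpa using h.symm
  rw [ringKrullDim_eq_of_isIntegral (MvPolynomial (Fin s) K) B,
    MvPolynomial.ringKrullDim_of_isNoetherianRing, htrdeg]
  simp

variable {K : Type*} [Field K]

theorem card_le_ringKrullDim_of_algebraicIndependent {F ι : Type*} [CommRing F] [Algebra K F]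
    [Algebra.FiniteType K F] [Fintype ι] {x : ι → F} (hx : AlgebraicIndependent K x) :
    (Fintype.card ι : WithBot ℕ∞) ≤ ringKrullDim F := by
  -- A prime avoiding the nonzero polynomials in `x` keeps `x` independent in the domain `F ⧸ Q`.
  obtain ⟨Q, hQ, -, hdisj⟩ := Ideal.exists_le_prime_disjoint (⊥ : Ideal F)
    ((nonZeroDivisors (MvPolynomial ι K)).map (aeval x)) (by
      rw [Set.disjoint_left]
      rintro _ h0 ⟨p, hp, rfl⟩
      exact nonZeroDivisors.ne_zero hp ((map_eq_zero_iff _ hx).1 h0))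
  have hxQ : AlgebraicIndependent K (Ideal.Quotient.mkₐ K Q ∘ x) := by
    refine algebraicIndependent_iff.2 fun p hp => ?_
    rw [Function.comp_def, ← comp_aeval_apply, Ideal.Quotient.mkₐ_eq_mk,
      Ideal.Quotient.eq_zero_iff_mem] at hp
    by_contra hne
    exact Set.disjoint_left.1 hdisj hp ⟨p, mem_nonZeroDivisors_of_ne_zero hne, rfl⟩
  calc (Fintype.card ι : WithBot ℕ∞)
      ≤ (Cardinal.toENat (Algebra.trdeg K (F ⧸ Q)) : WithBot ℕ∞) := by
        have := hxQ.lift_cardinalMk_le_trdeg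
        exact_mod_cast Cardinal.natCast_le_toENat.2 (by simpa using this)
    _ = ringKrullDim (F ⧸ Q) := (ringKrullDim_eq_trdeg K _).symm
    _ ≤ ringKrullDim F := ringKrullDim_quotient_le Q

theorem ringKrullDim_range_le_card {T κ : Type*} [CommRing T] [Algebra K T]
    [Algebra.FiniteType K T] [Fintype κ] (θ : T →ₐ[K] MvPolynomial κ K) :
    ringKrullDim θ.range ≤ Fintype.card κ := by
  have : Algebra.FiniteType K θ.range :=
    Algebra.FiniteType.of_surjective θ.rangeRestrict θ.rangeRestrict_surjective
  rw [ringKrullDim_eq_trdeg K]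
  have h := lift_trdeg_le_of_injective θ.range.val Subtype.val_injective
  rw [MvPolynomial.trdeg_of_isDomain] at h
  exact_mod_cast Cardinal.toENat_le_natCast.2 (by simpa using h)

theorem ringKrullDim_le_card_of_ker_le {T D κ : Type*} [CommRing T] [CommRing D] [Algebra K T]
    [Algebra K D] [Algebra.FiniteType K T] [Fintype κ] (θ : T →ₐ[K] MvPolynomial κ K)
    {ψ : T →ₐ[K] D} (hψ : Function.Surjective ψ) (hker : RingHom.ker θ ≤ RingHom.ker ψ) :
    ringKrullDim D ≤ Fintype.card κ := by
  let g : θ.range →ₐ[K] D :=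
    (Ideal.Quotient.liftₐ (RingHom.ker θ) ψ hker).comp
      (Ideal.quotientKerEquivRange θ).symm.toAlgHom
  have hg : Function.Surjective g :=
    (Ideal.Quotient.lift_surjective_of_surjective _ hker hψ).comp
      (Ideal.quotientKerEquivRange θ).symm.surjective
  exact (ringKrullDim_le_of_surjective g.toRingHom hg).trans (ringKrullDim_range_le_card θ)

theorem ker_le_ker_of_factorsThrough {R D ι κ : Type*} [CommSemiring R] [CommSemiring D]
    [Algebra R D]
    {θ : MvPolynomial ι R →ₐ[R] MvPolynomial κ R} {ψ : MvPolynomial ι R →ₐ[R] D}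
    {e : (ι →₀ ℕ) → κ →₀ ℕ} (hθ : ∀ m, θ (monomial m 1) = monomial (e m) 1)
    (hψ : (fun m => ψ (monomial m 1)).FactorsThrough e) : RingHom.ker θ ≤ RingHom.ker ψ := by
  let L : MvPolynomial κ R →ₗ[R] D :=
    (basisMonomials κ R).constr R (Function.extend e (fun m => ψ (monomial m 1)) 0)
  have hL : L ∘ₗ θ.toLinearMap = ψ.toLinearMap := by
    refine (basisMonomials ι R).ext fun m => ?_
    have : L (basisMonomials κ R (e m)) = ψ (monomial m 1) := by
      rw [Module.Basis.constr_basis, hψ.extend_apply]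
    simpa [hθ] using this
  intro x hx
  rw [RingHom.mem_ker] at hx ⊢
  have h := LinearMap.congr_fun hL x
  rwa [LinearMap.comp_apply, AlgHom.toLinearMap_apply, hx, map_zero, eq_comm] at h

theorem aeval_monomial_one_eq_monomial_linearCombination {R ι κ : Type*} [CommSemiring R]
    (u : ι → κ →₀ ℕ) (m : ι →₀ ℕ) :
    aeval (fun s => monomial (u s) (1 : R)) (monomial m (1 : R)) =
      monomial (Finsupp.linearCombination ℕ u m) 1 := by
  rw [aeval_monomial, map_one, one_mul, Finsupp.linearCombination_apply, Finsupp.sum,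
    monomial_sum_one]
  simp only [Finsupp.prod, monomial_pow, one_pow]

theorem ringKrullDim_le_card_of_factorsThrough {D ι κ : Type*} [CommRing D] [Algebra K D]
    [Finite ι] [Fintype κ] {ψ : MvPolynomial ι K →ₐ[K] D} (hψ : Function.Surjective ψ)
    (u : ι → κ →₀ ℕ)
    (hu : (fun m => ψ (monomial m 1)).FactorsThrough (Finsupp.linearCombination ℕ u)) :
    ringKrullDim D ≤ Fintype.card κ :=
  ringKrullDim_le_card_of_ker_le (aeval fun s => monomial (u s) 1) hψ
    (ker_le_ker_of_factorsThrough (aeval_monomial_one_eq_monomial_linearCombination u) hu)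

theorem ringKrullDim_quotient_le_card_of_factorsThrough {R ι κ : Type*} [CommRing R] [Algebra K R]
    [Finite ι] [Fintype κ] {P : Ideal R} {x : ι → R}
    (hx : Function.Surjective (aeval (R := K) fun s => Ideal.Quotient.mkₐ K P (x s)))
    (u : ι → κ →₀ ℕ) (hu : (fun m => aeval x (monomial m (1 : K))).FactorsThrough
      (Finsupp.linearCombination ℕ u)) : ringKrullDim (R ⧸ P) ≤ Fintype.card κ := by
  refine ringKrullDim_le_card_of_factorsThrough hx u fun m m' h => ?_
  simp only [← comp_aeval_apply]
  exact congrArg (Ideal.Quotient.mkₐ K P) (hu h)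

end KrullDimension

section Covers

theorem eq_of_forall_sum_Ici_eq {ι M : Type*} [PartialOrder ι] [LocallyFiniteOrderTop ι]
    [WellFoundedGT ι] [AddCommMonoid M] [IsRightCancelAdd M] {f g : ι → M}
    (h : ∀ o, ∑ s ∈ Finset.Ici o, f s = ∑ s ∈ Finset.Ici o, g s) : f = g := by
  funext o
  induction o using WellFoundedGT.induction with
  | ind o ih =>
    have htail : ∑ s ∈ Finset.Ioi o, f s = ∑ s ∈ Finset.Ioi o, g s :=
      Finset.sum_congr rfl fun s hs => ih s (Finset.mem_Ioi.1 hs)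
    have ho := h o
    rw [← Finset.add_sum_Ioi_eq_sum_Ici, ← Finset.add_sum_Ioi_eq_sum_Ici, htail] at ho
    exact add_right_cancel ho

variable {V ι : Type*} {G : SimpleGraph V} {A B : Set V}

/-- An exponent vector `m` is a `k`-cover of `G` if `m i + m j ≥ k` for every edge `{i, j}`. The
monomials of `J(G)` are the `x^m` for `1`-covers `m`, and for bipartite `G` those of `J(G)^k` are
the `x^m` for `k`-covers `m`. -/
def IsKCover (G : SimpleGraph V) (k : ℕ) (m : V →₀ ℕ) : Prop :=
  ∀ i j, G.Adj i j → k ≤ m i + m j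

theorem IsKCover.exists_adj_add_eq_of_minimal {k : ℕ} {m : V →₀ ℕ}
    (hm : Minimal (IsKCover G k) m) {i : V} (hi : m i ≠ 0) : ∃ j, G.Adj i j ∧ m i + m j = k := by
  classical
  by_contra! hne
  have hcov : IsKCover G k (m - Finsupp.single i 1) := by
    intro u v huv
    have huv' := hm.prop u v huv
    simp only [Finsupp.tsub_apply, Finsupp.single_apply]
    split_ifs with hu hv hv
    · exact absurd (hu.symm.trans hv) huv.ne
    · subst hu
      have := hne v huv
      lia
    · subst hv
      have := hne u huv.symm
      lia
    · exact huv'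
  have hle := hm.le_of_le hcov tsub_le_self i
  simp only [Finsupp.tsub_apply, Finsupp.single_eq_same] at hle
  lia

theorem IsKCover.minimal {k : ℕ} {m : V →₀ ℕ} (hm : IsKCover G k m)
    (htight : ∀ i, m i ≠ 0 → ∃ j, G.Adj i j ∧ m i + m j = k) : Minimal (IsKCover G k) m := by
  refine ⟨hm, fun m' hm' hle i => ?_⟩
  by_cases hi : m i = 0
  · simp [hi]
  · obtain ⟨j, hij, hk⟩ := htight i hi
    have := hm' i j hij
    have := hle j
    lia

/-- A family of vertex sets is tight if every vertex `i` used by the family has a neighbour `j`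
such that each member contains exactly one of `i` and `j`. Tight families of vertex covers are
those whose monomials `x^c t` have nonzero products in the fiber cone. -/
def IsTightFamily (G : SimpleGraph V) (c : ι → Set V) : Prop :=
  ∀ i, (∃ s, i ∈ c s) → ∃ j, G.Adj i j ∧ ∀ s, i ∈ c s ↔ j ∉ c s

variable [Finite V]

/-- The exponent vector of the squarefree monomial `∏_{i ∈ c} x_i`. -/
noncomputable def squarefreeExponent (c : Set V) : V →₀ ℕ :=
  Finsupp.equivFunOnFinite.symm (c.indicator 1)

open Classical in
theorem squarefreeExponent_apply (c : Set V) (i : V) :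
    squarefreeExponent c i = if i ∈ c then 1 else 0 :=
  Set.indicator_apply _ _ _

theorem isKCover_one_squarefreeExponent {c : Set V} :
    IsKCover G 1 (squarefreeExponent c) ↔ G.IsVertexCover c := by
  refine forall₃_congr fun i j _ => ?_
  simp only [squarefreeExponent_apply]
  split_ifs <;> simp_all

theorem IsKCover.exists_eq_add_squarefreeExponent (hAB : G.IsBipartiteWith A B) {k : ℕ}
    {m : V →₀ ℕ} (hm : IsKCover G (k + 1) m) :
    ∃ m' c, IsKCover G k m' ∧ G.IsVertexCover c ∧ m = m' + squarefreeExponent c := by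
  classical
  -- With thresholds `k + 1` on `A` and `1` off `A`, an edge whose end in `A` has exponent at most
  -- `k` has a positive exponent at the other end, and if both ends lose `1` their exponents add up
  -- to at least `k + 2`.
  let c : Set V := {i | if i ∈ A then k + 1 ≤ m i else 1 ≤ m i}
  have hcA {i} (hi : i ∈ A) : squarefreeExponent c i = if k + 1 ≤ m i then 1 else 0 := by
    simp [squarefreeExponent_apply, c, hi]
  have hcB {i} (hi : i ∉ A) : squarefreeExponent c i = if 1 ≤ m i then 1 else 0 := by
    simp [squarefreeExponent_apply, c, hi]
  have hedge {i j} (hi : i ∈ A) (hij : G.Adj i j) :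
      k ≤ m i - squarefreeExponent c i + (m j - squarefreeExponent c j) ∧
      1 ≤ squarefreeExponent c i + squarefreeExponent c j := by
    have hj : j ∉ A := hAB.disjoint.notMem_of_mem_right (hAB.mem_of_mem_adj hi hij)
    have := hm i j hij
    rw [hcA hi, hcB hj]
    split_ifs <;> lia
  refine ⟨m - squarefreeExponent c, c, fun i j hij => ?_,
    isKCover_one_squarefreeExponent.1 fun i j hij => ?_, (tsub_add_cancel_of_le fun i => ?_).symm⟩
  · rcases hAB.mem_of_adj hij with ⟨hi, -⟩ | ⟨-, hj⟩
    · exact (hedge hi hij).1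
    · exact (hedge hj hij.symm).1.trans_eq (add_comm _ _)
  · rcases hAB.mem_of_adj hij with ⟨hi, -⟩ | ⟨-, hj⟩
    · exact (hedge hi hij).2
    · exact (hedge hj hij.symm).2.trans_eq (add_comm _ _)
  · by_cases hi : i ∈ A
    · rw [hcA hi]; split_ifs <;> lia
    · rw [hcB hi]; split_ifs <;> lia

/-- The exponent vector of `∏_s (x^{c_s})^{m_s}`, where `x^c` is the squarefree monomial with
support `c`. -/
noncomputable def coverExponent (c : ι → Set V) (m : ι →₀ ℕ) : V →₀ ℕ :=
  Finsupp.linearCombination ℕ (fun s => squarefreeExponent (c s)) m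

open Classical in
theorem coverExponent_apply (c : ι → Set V) (m : ι →₀ ℕ) (i : V) :
    coverExponent c m i = ∑ s ∈ m.support with i ∈ c s, m s := by
  simp [coverExponent, Finsupp.linearCombination_apply, Finsupp.sum, squarefreeExponent_apply,
    Finset.sum_filter]

theorem isKCover_coverExponent {c : ι → Set V} (hc : ∀ s, G.IsVertexCover (c s)) (m : ι →₀ ℕ) :
    IsKCover G m.degree (coverExponent c m) := by
  classical
  intro i j hij
  rw [coverExponent_apply, coverExponent_apply, Finsupp.degree_apply, ← Finset.sum_union_inter,
    ← Finset.filter_or, Finset.filter_true_of_mem fun s _ => hc s hij]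
  exact Nat.le_add_right _ _

theorem coverExponent_add_coverExponent {c : ι → Set V} {i j : V}
    (hij : ∀ s, i ∈ c s ↔ j ∉ c s) (m : ι →₀ ℕ) :
    coverExponent c m i + coverExponent c m j = m.degree := by
  classical
  rw [coverExponent_apply, coverExponent_apply, Finsupp.degree_apply]
  simp only [hij, add_comm]
  exact Finset.sum_filter_add_sum_filter_not _ _ _

theorem coverExponent_eq_zero {c : ι → Set V} {i : V} (hi : ∀ s, i ∉ c s) (m : ι →₀ ℕ) :
    coverExponent c m i = 0 := by
  simp [coverExponent_apply, hi]

theorem IsTightFamily.minimal_isKCover {c : ι → Set V} (htight : IsTightFamily G c)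
    (hc : ∀ s, G.IsVertexCover (c s)) (m : ι →₀ ℕ) :
    Minimal (IsKCover G m.degree) (coverExponent c m) := by
  refine (isKCover_coverExponent hc m).minimal fun i hi => ?_
  obtain ⟨j, hij, hji⟩ := htight i (by
    by_contra! h
    exact hi (coverExponent_eq_zero h m))
  exact ⟨j, hij, coverExponent_add_coverExponent hji m⟩

theorem isTightFamily_of_minimal_isKCover {c : ι → Set V} (hc : ∀ s, G.IsVertexCover (c s))
    {m : ι →₀ ℕ} (hm : ∀ s, m s ≠ 0) (hmin : Minimal (IsKCover G m.degree) (coverExponent c m)) :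
    IsTightFamily G c := by
  classical
  rintro i ⟨s, hs⟩
  have hi : coverExponent c m i ≠ 0 := by
    rw [coverExponent_apply]
    exact fun h => hm s (Finset.sum_eq_zero_iff.1 h s (by simp [hs, hm]))
  obtain ⟨j, hij, heq⟩ := IsKCover.exists_adj_add_eq_of_minimal hmin hi
  refine ⟨j, hij, fun s => ⟨fun his hjs => hm s ?_, fun hjs => (hc s hij).resolve_right hjs⟩⟩
  rw [coverExponent_apply, coverExponent_apply, Finsupp.degree_apply, ← Finset.sum_union_inter,
    ← Finset.filter_or, Finset.filter_true_of_mem fun s _ => hc s hij, Nat.add_eq_left,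
    Finset.sum_eq_zero_iff] at heq
  exact heq s (by simp [his, hjs, hm])

theorem IsTightFamily.coverExponent_congr {c : ι → Set V} (htight : IsTightFamily G c)
    (hAB : G.IsBipartiteWith A B) {m m' : ι →₀ ℕ} (hdeg : m.degree = m'.degree)
    (hA : ∀ i ∈ A, coverExponent c m i = coverExponent c m' i) :
    coverExponent c m = coverExponent c m' := by
  ext i
  by_cases hi : ∃ s, i ∈ c s
  · obtain ⟨j, hij, hj⟩ := htight i hi
    rcases hAB.mem_of_adj hij with ⟨hiA, -⟩ | ⟨-, hjA⟩
    · exact hA i hiA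
    · have := coverExponent_add_coverExponent hj m
      have := coverExponent_add_coverExponent hj m'
      have := hA j hjA
      lia
  · push Not at hi
    rw [coverExponent_eq_zero hi, coverExponent_eq_zero hi]

theorem coverExponent_eq_of_forall_mem_iff {c : ι → Set V} {i j : V}
    (h : ∀ s, i ∈ c s ↔ j ∈ c s) (m : ι →₀ ℕ) : coverExponent c m i = coverExponent c m j := by
  classical
  simp only [coverExponent_apply, h]

/-- The weight of a vertex set `c` recording its degree `1` in `t` and its incidences with the
vertices `a p`. -/
noncomputable def incidenceWeight {κ : Type*} [Finite κ] (a : κ → V) (c : Set V) :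
    Option κ →₀ ℕ :=
  Finsupp.equivFunOnFinite.symm fun o => o.elim 1 fun p => squarefreeExponent c (a p)

theorem linearCombination_incidenceWeight_none {κ : Type*} [Finite κ] (a : κ → V)
    (c : ι → Set V) (m : ι →₀ ℕ) :
    Finsupp.linearCombination ℕ (fun s => incidenceWeight a (c s)) m none = m.degree := by
  simp [Finsupp.linearCombination_apply, Finsupp.sum, incidenceWeight, Finsupp.degree_apply]

theorem linearCombination_incidenceWeight_some {κ : Type*} [Finite κ] (a : κ → V)
    (c : ι → Set V) (m : ι →₀ ℕ) (p : κ) :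
    Finsupp.linearCombination ℕ (fun s => incidenceWeight a (c s)) m (some p) =
      coverExponent c m (a p) := by
  simp [Finsupp.linearCombination_apply, Finsupp.sum, incidenceWeight, coverExponent]

end Covers

section FreeParameters

variable {n : ℕ} {G : SimpleGraph (Fin n)} {A B : Set (Fin n)}

theorem HasFreeParameterSet.le {r : ℕ} (h : HasFreeParameterSet G r) : r ≤ n := by
  obtain ⟨a, -, ha, -⟩ := h
  simpa using Fintype.card_le_of_injective a ha

theorem bddAbove_hasFreeParameterSet (G : SimpleGraph (Fin n)) :
    BddAbove {r : ℕ | HasFreeParameterSet G r} :=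
  ⟨n, fun _ h => HasFreeParameterSet.le h⟩

theorem hasFreeParameterSet_zero (G : SimpleGraph (Fin n)) : HasFreeParameterSet G 0 :=
  ⟨Fin.elim0, Fin.elim0, by simp [IsFreeParameterPair, Function.Injective]⟩

theorem HasFreeParameterSet.add_one_le_gdim {r : ℕ} (h : HasFreeParameterSet G r) :
    r + 1 ≤ gdim G :=
  Nat.add_le_add_right (le_csSup (bddAbove_hasFreeParameterSet G) h) 1

theorem exists_hasFreeParameterSet_gdim_eq (G : SimpleGraph (Fin n)) :
    ∃ r, HasFreeParameterSet G r ∧ gdim G = r + 1 :=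
  ⟨_, Nat.sSup_mem ⟨0, hasFreeParameterSet_zero G⟩ (bddAbove_hasFreeParameterSet G), rfl⟩

theorem exists_equiv_isFreeParameterPair_of_height {r : ℕ} {ι α : Type*} [Fintype ι]
    (hr : Fintype.card ι = r) [LinearOrder α] (hAB : G.IsBipartiteWith A B) {a b : ι → Fin n}
    (haA : ∀ p, a p ∈ A) (hab : ∀ p, G.Adj (a p) (b p)) (height : ι → α)
    (hheight : ∀ p q, p ≠ q → G.Adj (a p) (b q) → height p < height q) :
    ∃ σ : Fin r ≃ ι, IsFreeParameterPair G (a ∘ σ) (b ∘ σ) := by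
  have hbB p : b p ∈ B := hAB.mem_of_mem_adj (haA p) (hab p)
  have hno_swap {p q} (hpq : G.Adj (a p) (b q)) (hqp : G.Adj (a q) (b p)) : p = q := by
    by_contra hne
    exact lt_asymm (hheight p q hne hpq) (hheight q p (Ne.symm hne) hqp)
  have ha : Function.Injective a := fun p q h => hno_swap (h ▸ hab q) (h ▸ hab p)
  have hb : Function.Injective b := fun p q h => hno_swap (h ▸ hab p) (h ▸ hab q)
  let e : Fin r ≃ ι := (Fintype.equivFinOfCardEq hr).symm
  let σ : Fin r ≃ ι := (Tuple.sort (height ∘ e)).trans e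
  have hσ : Monotone (height ∘ σ) := Tuple.monotone_sort (height ∘ e)
  refine ⟨σ, ha.comp σ.injective, hb.comp σ.injective, fun i j h => ?_, fun i j h => ?_,
    fun i => hab (σ i), fun i j h => ?_⟩
  · exact hAB.disjoint.notMem_of_mem_left (haA _) (hAB.mem_of_mem_adj (haA _) h)
  · exact hAB.disjoint.ne_of_mem (haA (σ i)) (hbB (σ j)) h
  · by_contra! hji
    exact (hσ hji.le).not_gt (hheight _ _ (σ.injective.ne hji.ne') h)

theorem HasFreeParameterSet.exists_isFreeParameterPair_mem {r : ℕ}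
    (hr : HasFreeParameterSet G r) (hAB : G.IsBipartiteWith A B) :
    ∃ a b : Fin r → Fin n, IsFreeParameterPair G a b ∧ ∀ p, a p ∈ A := by
  classical
  obtain ⟨a, b, -, -, hindep, -, hab, hle⟩ := hr
  -- Swap `a p` and `b p` whenever `a p ∉ A`; the pairs are then ordered by putting the swapped
  -- ones first, in reversed order.
  let a' p := if a p ∈ A then a p else b p
  let b' p := if a p ∈ A then b p else a p
  let height (p : Fin r) : ℤ := if a p ∈ A then p + 1 else -p
  have ha'A p : a' p ∈ A := by
    by_cases hp : a p ∈ A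
    · simpa only [a', if_pos hp] using hp
    · simpa only [a', if_neg hp] using ((hAB.mem_of_adj (hab p)).resolve_left fun h => hp h.1).2
  have hab' p : G.Adj (a' p) (b' p) := by
    by_cases hp : a p ∈ A
    · simpa only [a', b', if_pos hp] using hab p
    · simpa only [a', b', if_neg hp] using (hab p).symm
  have hheight p q (hne : p ≠ q) (h : G.Adj (a' p) (b' q)) : height p < height q := by
    have : (p : ℕ) ≠ q := Fin.val_ne_of_ne hne
    by_cases hp : a p ∈ A <;> by_cases hq : a q ∈ A <;>
      simp only [a', b', height, if_pos, if_neg, hp, hq, not_false_eq_true] at h ⊢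
    · have : (p : ℕ) ≤ q := hle p q h
      lia
    · exact absurd h (hindep p q)
    · lia
    · have : (q : ℕ) ≤ p := hle q p h.symm
      lia
  obtain ⟨σ, hσ⟩ := exists_equiv_isFreeParameterPair_of_height (Fintype.card_fin r) hAB ha'A hab'
    height hheight
  exact ⟨a' ∘ σ, b' ∘ σ, hσ, fun p => ha'A (σ p)⟩

theorem IsTightFamily.exists_isFreeParameterPair {ι : Type*} [Finite ι]
    {c : ι → Set (Fin n)} (htight : IsTightFamily G c) (hc : ∀ s, G.IsVertexCover (c s))
    (hAB : G.IsBipartiteWith A B) :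
    ∃ (r : ℕ) (a b : Fin r → Fin n), IsFreeParameterPair G a b ∧
      ∀ i ∈ A, (∃ s, i ∈ c s) → ∃ p, ∀ s, i ∈ c s ↔ a p ∈ c s := by
  classical
  have := Fintype.ofFinite ι
  -- One vertex of `A` per incidence pattern: an edge between `a P` and `b Q` forces `Q ⊆ P`, as
  -- members of the family that miss `b Q` must contain `a P`.
  let pattern (i : Fin n) : Set ι := {s | i ∈ c s}
  let T := {P : Set ι // ∃ i ∈ A, (∃ s, i ∈ c s) ∧ pattern i = P}
  have hT (P : T) : ∃ i j, i ∈ A ∧ pattern i = P ∧ G.Adj i j ∧ pattern j = (P : Set ι)ᶜ := by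
    obtain ⟨P, i, hiA, hi, rfl⟩ := P
    obtain ⟨j, hij, hj⟩ := htight i hi
    exact ⟨i, j, hiA, rfl, hij, Set.ext fun s => by simp [pattern, hj s]⟩
  choose a b haA hpat hab hpatb using hT
  have hheight P Q (hne : P ≠ Q) (h : G.Adj (a P) (b Q)) :
      OrderDual.toDual (P : Set ι).ncard < OrderDual.toDual (Q : Set ι).ncard := by
    refine OrderDual.toDual_lt_toDual.2 (Set.ncard_lt_ncard (LE.le.ssubset_of_ne
      (fun s hs => ?_) fun h => hne (Subtype.ext h.symm)) (Set.toFinite _))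
    rw [← hpat P]
    refine (hc s h).resolve_right fun hbs => ?_
    have : s ∈ (Q : Set ι)ᶜ := hpatb Q ▸ hbs
    exact this hs
  obtain ⟨σ, hσ⟩ := exists_equiv_isFreeParameterPair_of_height rfl hAB haA hab _
    hheight
  refine ⟨_, a ∘ σ, b ∘ σ, hσ, fun i hiA hi => ?_⟩
  refine ⟨σ.symm ⟨pattern i, i, hiA, hi, rfl⟩, fun s => ?_⟩
  simpa [pattern] using (Set.ext_iff.1 (hpat ⟨pattern i, i, hiA, hi, rfl⟩) s).symm

theorem IsTightFamily.exists_hasFreeParameterSet_factorsThrough {ι : Type*} [Finite ι]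
    {c : ι → Set (Fin n)} (htight : IsTightFamily G c) (hc : ∀ s, G.IsVertexCover (c s))
    (hAB : G.IsBipartiteWith A B) :
    ∃ r, HasFreeParameterSet G r ∧ ∃ u : ι → Option (Fin r) →₀ ℕ,
      (fun m => (m.degree, coverExponent c m)).FactorsThrough (Finsupp.linearCombination ℕ u) := by
  obtain ⟨r, a, b, hfree, ha⟩ := htight.exists_isFreeParameterPair hc hAB
  refine ⟨r, ⟨a, b, hfree⟩, fun s => incidenceWeight a (c s), fun m m' h => ?_⟩
  have hdeg : m.degree = m'.degree := by
    simpa only [linearCombination_incidenceWeight_none] using DFunLike.congr_fun h none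
  have hval p : coverExponent c m (a p) = coverExponent c m' (a p) := by
    simpa only [linearCombination_incidenceWeight_some] using DFunLike.congr_fun h (some p)
  refine Prod.ext hdeg (htight.coverExponent_congr hAB hdeg fun i hi => ?_)
  by_cases hs : ∃ s, i ∈ c s
  · obtain ⟨p, hp⟩ := ha i hi hs
    rw [coverExponent_eq_of_forall_mem_iff hp, coverExponent_eq_of_forall_mem_iff hp, hval]
  · push Not at hs
    rw [coverExponent_eq_zero hs, coverExponent_eq_zero hs]

end FreeParameters

section Chains

variable {V ι : Type*} {G : SimpleGraph V} {A B : Set V}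

/-- The vertex cover `N(Y) ∪ N(A ∖ N(Y))` attached to a subset `Y` of the side opposite to `A`
in a bipartite graph, where `N` denotes the neighbourhood of a set of vertices. -/
def neighborhoodCover (G : SimpleGraph V) (A Y : Set V) : Set V :=
  {i | (∃ j ∈ Y, G.Adj i j) ∨ ∃ i' ∈ A, G.Adj i i' ∧ ∀ j ∈ Y, ¬ G.Adj i' j}

theorem mem_neighborhoodCover_of_mem_left (hAB : G.IsBipartiteWith A B) (Y : Set V) {i : V}
    (hi : i ∈ A) : i ∈ neighborhoodCover G A Y ↔ ∃ j ∈ Y, G.Adj i j :=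
  or_iff_left fun ⟨_, hi', hii', _⟩ =>
    hAB.disjoint.notMem_of_mem_left hi' (hAB.mem_of_mem_adj hi hii')

theorem mem_neighborhoodCover_of_mem_right (hAB : G.IsBipartiteWith A B) {Y : Set V}
    (hY : Y ⊆ B) {j : V} (hj : j ∈ B) :
    j ∈ neighborhoodCover G A Y ↔ ∃ i ∈ A, G.Adj j i ∧ i ∉ neighborhoodCover G A Y := by
  have hleft : ¬ ∃ j' ∈ Y, G.Adj j j' := fun ⟨_, hj', hjj'⟩ =>
    hAB.disjoint.notMem_of_mem_right (hY hj') (hAB.symm.mem_of_mem_adj hj hjj')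
  refine (or_iff_right hleft).trans (exists_congr fun i => and_congr_right fun hi => ?_)
  rw [mem_neighborhoodCover_of_mem_left hAB Y hi]
  push Not
  rfl

theorem isVertexCover_neighborhoodCover (hAB : G.IsBipartiteWith A B) {Y : Set V} (hY : Y ⊆ B) :
    G.IsVertexCover (neighborhoodCover G A Y) := by
  have hedge {i j} (hi : i ∈ A) (hij : G.Adj i j) :
      i ∈ neighborhoodCover G A Y ∨ j ∈ neighborhoodCover G A Y :=
    or_iff_not_imp_left.2 fun hiY =>
      (mem_neighborhoodCover_of_mem_right hAB hY (hAB.mem_of_mem_adj hi hij)).2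
        ⟨i, hi, hij.symm, hiY⟩
  intro i j hij
  rcases hAB.mem_of_adj hij with ⟨hi, -⟩ | ⟨-, hj⟩
  · exact hedge hi hij
  · exact (hedge hj hij.symm).symm

theorem isTightFamily_neighborhoodCover [LinearOrder ι] [Finite ι] (hAB : G.IsBipartiteWith A B)
    {Y : ι → Set V} (hYB : ∀ s, Y s ⊆ B) (hY : Monotone Y) :
    IsTightFamily G fun s => neighborhoodCover G A (Y s) := by
  have hmono {s t i} (hi : i ∈ A) (hst : s ≤ t) (his : i ∈ neighborhoodCover G A (Y s)) :
      i ∈ neighborhoodCover G A (Y t) := by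
    rw [mem_neighborhoodCover_of_mem_left hAB _ hi] at his ⊢
    exact his.imp fun j hj => ⟨hY hst hj.1, hj.2⟩
  rintro i ⟨s, his⟩
  have hi : i ∈ A ∨ i ∈ B := by
    rcases his with ⟨j, -, hij⟩ | ⟨j, -, hij, -⟩ <;>
      exact (hAB.mem_of_adj hij).imp And.left And.left
  rcases hi with hi | hi
  · obtain ⟨s₀, hs₀, hmin⟩ := (Set.toFinite {s | i ∈ neighborhoodCover G A (Y s)}).exists_minimal
      ⟨s, his⟩
    obtain ⟨j, hjY, hij⟩ := (mem_neighborhoodCover_of_mem_left hAB _ hi).1 hs₀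
    refine ⟨j, hij, fun t => ⟨fun hit hjt => ?_, fun hjt => ?_⟩⟩
    · obtain ⟨i', hi', hji', hi't⟩ :=
        (mem_neighborhoodCover_of_mem_right hAB (hYB t) (hYB s₀ hjY)).1 hjt
      have hs₀t : s₀ ≤ t := (le_total s₀ t).elim id (hmin hit)
      exact hi't ((mem_neighborhoodCover_of_mem_left hAB _ hi').2 ⟨j, hY hs₀t hjY, hji'.symm⟩)
    · exact ((isVertexCover_neighborhoodCover hAB (hYB t)) hij).resolve_right hjt
  · obtain ⟨s₀, hs₀, hmax⟩ := (Set.toFinite {s | i ∈ neighborhoodCover G A (Y s)}).exists_maximal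
      ⟨s, his⟩
    obtain ⟨j, hj, hij, hjs₀⟩ := (mem_neighborhoodCover_of_mem_right hAB (hYB s₀) hi).1 hs₀
    refine ⟨j, hij, fun t => ⟨fun hit hjt => ?_, fun hjt => ?_⟩⟩
    · have hts₀ : t ≤ s₀ := (le_total t s₀).elim id (hmax hit)
      exact hjs₀ (hmono hj hts₀ hjt)
    · exact (mem_neighborhoodCover_of_mem_right hAB (hYB t) hi).2 ⟨j, hj, hij, hjt⟩

theorem IsFreeParameterPair.exists_isTightFamily {n r : ℕ} {G : SimpleGraph (Fin n)}
    {A B : Set (Fin n)} {a b : Fin r → Fin n} (hfree : IsFreeParameterPair G a b)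
    (hAB : G.IsBipartiteWith A B) (haA : ∀ p, a p ∈ A) :
    ∃ c : Fin (r + 1) → Set (Fin n), (∀ s, G.IsVertexCover (c s)) ∧ IsTightFamily G c ∧
      ∀ p s, a p ∈ c s ↔ p.succ ≤ s := by
  obtain ⟨-, -, -, -, hab, hle⟩ := hfree
  let Y (s : Fin (r + 1)) : Set (Fin n) := b '' {q | q.succ ≤ s}
  have hYB s : Y s ⊆ B := by
    rintro _ ⟨q, -, rfl⟩
    exact hAB.mem_of_mem_adj (haA q) (hab q)
  have hY : Monotone Y := fun s t hst => Set.image_mono fun q hq => le_trans hq hst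
  refine ⟨fun s => neighborhoodCover G A (Y s),
    fun s => isVertexCover_neighborhoodCover hAB (hYB s),
    isTightFamily_neighborhoodCover hAB hYB hY, fun p s => ?_⟩
  rw [mem_neighborhoodCover_of_mem_left hAB _ (haA p)]
  constructor
  · rintro ⟨_, ⟨q, hq, rfl⟩, hpq⟩
    exact (Fin.succ_le_succ_iff.2 (hle p q hpq)).trans hq
  · exact fun hp => ⟨b p, ⟨p, hp, rfl⟩, hab p⟩

theorem IsFreeParameterPair.exists_isTightFamily_injective {n r : ℕ} {G : SimpleGraph (Fin n)}
    {A B : Set (Fin n)} {a b : Fin r → Fin n} (hfree : IsFreeParameterPair G a b)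
    (hAB : G.IsBipartiteWith A B) (haA : ∀ p, a p ∈ A) :
    ∃ c : Fin (r + 1) → Set (Fin n), (∀ s, G.IsVertexCover (c s)) ∧ IsTightFamily G c ∧
      Function.Injective fun m : Fin (r + 1) →₀ ℕ => (m.degree, coverExponent c m) := by
  obtain ⟨c, hc, htight, hac⟩ := hfree.exists_isTightFamily hAB haA
  refine ⟨c, hc, htight, fun m m' h => DFunLike.coe_injective (eq_of_forall_sum_Ici_eq fun o => ?_)⟩
  obtain ⟨hdeg, hexp⟩ := Prod.ext_iff.1 h
  induction o using Fin.cases with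
  | zero => simpa [Finsupp.degree_eq_sum, ← bot_eq_zero, Finset.Ici_bot] using hdeg
  | succ p =>
    have hp (m : Fin (r + 1) →₀ ℕ) :
        coverExponent c m (a p) = ∑ s ∈ Finset.Ici p.succ, m s := by
      simp only [coverExponent_apply, hac]
      refine Finset.sum_subset (fun s hs => by simp_all) fun s hs hs' => ?_
      simp_all
    rw [← hp, ← hp]
    exact DFunLike.congr_fun hexp (a p)

end Chains

section CoverIdeal

variable {K : Type*} [Field K] {n : ℕ} {G : SimpleGraph (Fin n)} {A B : Set (Fin n)}

theorem mem_coverIdeal_iff {f : MvPolynomial (Fin n) K} :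
    f ∈ coverIdeal K G ↔ ∀ m ∈ f.support, IsKCover G 1 m := by
  simp only [coverIdeal, Submodule.mem_iInf, mem_ideal_span_X_image]
  constructor
  · intro h m hm i j hij
    obtain ⟨v, hv, hmv⟩ := h s(i, j) hij m hm
    rcases Sym2.mem_iff.1 hv with rfl | rfl <;> lia
  · intro h e he m hm
    induction e using Sym2.ind with
    | _ i j =>
      have := h m hm i j he
      by_cases hi : m i = 0
      · exact ⟨j, Sym2.mem_mk_right i j, by lia⟩
      · exact ⟨i, Sym2.mem_mk_left i j, hi⟩

theorem isKCover_of_mem_coverIdeal_pow {k : ℕ} {f : MvPolynomial (Fin n) K}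
    (hf : f ∈ coverIdeal K G ^ k) {m : Fin n →₀ ℕ} (hm : m ∈ f.support) : IsKCover G k m := by
  induction k generalizing f m with
  | zero => exact fun i j _ => Nat.zero_le _
  | succ k ih =>
    rw [pow_succ] at hf
    induction hf using Submodule.mul_induction_on' generalizing m with
    | mem_mul_mem p hp q hq =>
      obtain ⟨u, hu, v, hv, rfl⟩ := Finset.mem_add.1 (support_mul p q hm)
      intro i j hij
      have hu' := ih hp hu i j hij
      have hv' := mem_coverIdeal_iff.1 hq v hv i j hij
      simp only [Finsupp.add_apply]
      lia
    | add p _ q _ hp' hq' =>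
      exact (Finset.mem_union.1 (support_add hm)).elim hp' hq'

theorem monomial_squarefreeExponent_mem_coverIdeal {c : Set (Fin n)} (hc : G.IsVertexCover c) :
    monomial (squarefreeExponent c) (1 : K) ∈ coverIdeal K G := by
  refine mem_coverIdeal_iff.2 fun m hm => ?_
  rw [Finset.mem_singleton.1 (support_monomial_subset hm)]
  exact isKCover_one_squarefreeExponent.2 hc

theorem IsKCover.monomial_mem_coverIdeal_pow (hAB : G.IsBipartiteWith A B) {k : ℕ}
    {m : Fin n →₀ ℕ} (hm : IsKCover G k m) : monomial m (1 : K) ∈ coverIdeal K G ^ k := by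
  induction k generalizing m with
  | zero => simp
  | succ k ih =>
    obtain ⟨m', c, hm', hc, rfl⟩ := hm.exists_eq_add_squarefreeExponent hAB
    rw [← one_mul (1 : K), ← monomial_mul, pow_succ]
    exact Ideal.mul_mem_mul (ih hm') (monomial_squarefreeExponent_mem_coverIdeal hc)

end CoverIdeal

section ReesAlgebra

instance {R S : Type*} [CommRing R] [CommRing S] [IsNoetherianRing S] [Algebra R S]
    [Algebra.FiniteType R S] (I : Ideal S) : Algebra.FiniteType R (reesAlgebra I) :=
  have : Algebra.FiniteType S (reesAlgebra I) :=
    (Subalgebra.fg_iff_finiteType _).1 (reesAlgebra.fg (IsNoetherian.noetherian I))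
  Algebra.FiniteType.trans (S := S) inferInstance this

variable (K : Type*) [Field K] {n : ℕ} (G : SimpleGraph (Fin n)) {A B : Set (Fin n)}

/-- The element `x^c t` of the Rees algebra of `J(G)` attached to a vertex cover `c`. -/
noncomputable def coverGenerator (c : {c : Set (Fin n) // G.IsVertexCover c}) :
    reesAlgebra (coverIdeal K G) :=
  ⟨Polynomial.monomial 1 (monomial (squarefreeExponent c.1) 1),
    reesAlgebra.monomial_mem.2 (by
      simpa using monomial_squarefreeExponent_mem_coverIdeal c.2)⟩

/-- The variable `x_i`, as an element of degree zero of the Rees algebra of `J(G)`. -/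
noncomputable def reesVariable (i : Fin n) : reesAlgebra (coverIdeal K G) :=
  ⟨Polynomial.C (X i), Subalgebra.algebraMap_mem _ _⟩

theorem reesIrrelevantIdeal_eq_span_range :
    reesIrrelevantIdeal K G = Ideal.span (Set.range (reesVariable K G)) :=
  congrArg Ideal.span (Set.ext fun _ => exists_congr fun i =>
    eq_comm.trans (Subtype.ext_iff (a1 := reesVariable K G i)).symm)

theorem reesVariable_mem_reesIrrelevantIdeal (i : Fin n) :
    reesVariable K G i ∈ reesIrrelevantIdeal K G :=
  Ideal.subset_span ⟨i, rfl⟩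

variable {K G}

theorem coe_aeval_coverGenerator_monomial {ι : Type*}
    (c : ι → {c : Set (Fin n) // G.IsVertexCover c}) (m : ι →₀ ℕ) :
    (aeval (fun s => coverGenerator K G (c s)) (monomial m (1 : K)) :
        Polynomial (MvPolynomial (Fin n) K)) =
      Polynomial.monomial m.degree (monomial (coverExponent (fun s => (c s).1) m) (1 : K)) := by
  induction m using Finsupp.induction_linear with
  | zero => simp [coverExponent]
  | add m m' hm hm' =>
    rw [← one_mul (1 : K), ← monomial_mul, map_mul, Subalgebra.coe_mul, hm, hm',
      Polynomial.monomial_mul_monomial, monomial_mul, map_add, coverExponent, coverExponent,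
      coverExponent, map_add]
  | single s k =>
    rw [aeval_monomial, Finsupp.prod_single_index (by simp)]
    simp [coverGenerator, coverExponent, Polynomial.monomial_pow, monomial_pow]

theorem factorsThrough_aeval_coverGenerator {ι α : Type*}
    {c : ι → {c : Set (Fin n) // G.IsVertexCover c}} {e : (ι →₀ ℕ) → α}
    (he : (fun m => (m.degree, coverExponent (fun s => (c s).1) m)).FactorsThrough e) :
    (fun m => aeval (fun s => coverGenerator K G (c s)) (monomial m (1 : K))).FactorsThrough e := by
  intro m m' h
  obtain ⟨hdeg, hexp⟩ := Prod.ext_iff.1 (he h)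
  dsimp only at hdeg hexp
  refine Subtype.ext ?_
  dsimp only
  rw [coe_aeval_coverGenerator_monomial, coe_aeval_coverGenerator_monomial, hdeg, hexp]

theorem coeff_eq_zero_of_mem_reesIrrelevantIdeal {x : reesAlgebra (coverIdeal K G)}
    (hx : x ∈ reesIrrelevantIdeal K G) {k : ℕ} {m : Fin n →₀ ℕ}
    (hm : Minimal (IsKCover G k) m) :
    coeff m ((x : Polynomial (MvPolynomial (Fin n) K)).coeff k) = 0 := by
  rw [reesIrrelevantIdeal_eq_span_range, Ideal.mem_span_range_iff_exists_fun] at hx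
  obtain ⟨g, rfl⟩ := hx
  push_cast
  rw [Polynomial.finsetSum_coeff, coeff_sum]
  refine Finset.sum_eq_zero fun i _ => ?_
  simp only [reesVariable, Polynomial.coeff_mul_C]
  rw [coeff_mul_X']
  split_ifs with hi
  · by_contra hne
    have hcov : IsKCover G k (m - Finsupp.single i 1) :=
      isKCover_of_mem_coverIdeal_pow ((g i).2 k) (mem_support_iff.2 hne)
    have hle := hm.le_of_le hcov tsub_le_self i
    have hmi : m i ≠ 0 := Finsupp.mem_support_iff.1 hi
    simp only [Finsupp.tsub_apply, Finsupp.single_eq_same] at hle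
    lia
  · rfl

theorem mem_reesIrrelevantIdeal_iff_not_minimal (hAB : G.IsBipartiteWith A B)
    {x : reesAlgebra (coverIdeal K G)} {k : ℕ} {m : Fin n →₀ ℕ}
    (hx : (x : Polynomial (MvPolynomial (Fin n) K)) = Polynomial.monomial k (monomial m 1)) :
    x ∈ reesIrrelevantIdeal K G ↔ ¬ Minimal (IsKCover G k) m := by
  constructor
  · intro hmem hmin
    simpa [hx] using coeff_eq_zero_of_mem_reesIrrelevantIdeal hmem hmin
  · intro hnot
    have hm : IsKCover G k m := isKCover_of_mem_coverIdeal_pow (x.2 k) (by simp [hx])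
    obtain ⟨m', hlt, hm'⟩ := (not_minimal_iff_exists_lt hm).1 hnot
    obtain ⟨hle, i, hi⟩ := Finsupp.lt_def.1 hlt
    have hm'_le : m' ≤ m - Finsupp.single i 1 := by
      refine le_tsub_of_add_le_right fun j => ?_
      by_cases hj : j = i
      · subst hj; simpa using hi
      · simpa [Finsupp.single_eq_of_ne hj] using hle j
    have hcov : IsKCover G k (m - Finsupp.single i 1) := fun u v huv =>
      (hm' u v huv).trans (add_le_add (hm'_le u) (hm'_le v))
    let y : reesAlgebra (coverIdeal K G) :=
      ⟨Polynomial.monomial k (monomial (m - Finsupp.single i 1) 1),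
        reesAlgebra.monomial_mem.2 (hcov.monomial_mem_coverIdeal_pow hAB)⟩
    have hxy : x = y * reesVariable K G i := by
      refine Subtype.ext ?_
      rw [hx, Subalgebra.coe_mul, reesVariable, Polynomial.monomial_mul_C, X, monomial_mul,
        one_mul, tsub_add_cancel_of_le (Finsupp.single_le_iff.2 (Nat.one_le_of_lt hi))]
    exact hxy ▸ Ideal.mul_mem_left _ y (reesVariable_mem_reesIrrelevantIdeal K G i)

theorem coe_aeval_reesVariable (p : MvPolynomial (Fin n) K) :
    (aeval (reesVariable K G) p : Polynomial (MvPolynomial (Fin n) K)) = Polynomial.C p := by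
  induction p using MvPolynomial.induction_on with
  | C a => simp
  | add p q hp hq => simp [hp, hq]
  | mul_X p i hp => simp [hp, reesVariable]

theorem exists_mem_adjoin_coe_eq_monomial (hAB : G.IsBipartiteWith A B) {k : ℕ}
    {m : Fin n →₀ ℕ} (hm : IsKCover G k m) :
    ∃ x ∈ Algebra.adjoin K (Set.range (reesVariable K G) ∪ Set.range (coverGenerator K G)),
      (x : Polynomial (MvPolynomial (Fin n) K)) = Polynomial.monomial k (monomial m 1) := by
  induction k generalizing m with
  | zero =>
    refine ⟨aeval (reesVariable K G) (monomial m 1), ?_, coe_aeval_reesVariable _⟩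
    refine Algebra.adjoin_mono Set.subset_union_left ?_
    rw [Algebra.adjoin_range_eq_range_aeval]
    exact ⟨_, rfl⟩
  | succ k ih =>
    obtain ⟨m', c, hm', hc, rfl⟩ := hm.exists_eq_add_squarefreeExponent hAB
    obtain ⟨x, hx, hxm⟩ := ih hm'
    refine ⟨x * coverGenerator K G ⟨c, hc⟩,
      mul_mem hx (Algebra.subset_adjoin (.inr ⟨⟨c, hc⟩, rfl⟩)), ?_⟩
    rw [Subalgebra.coe_mul, hxm, coverGenerator, Polynomial.monomial_mul_monomial, monomial_mul,
      one_mul]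

theorem adjoin_reesVariable_union_coverGenerator_eq_top (hAB : G.IsBipartiteWith A B) :
    Algebra.adjoin K (Set.range (reesVariable K G) ∪ Set.range (coverGenerator K G)) = ⊤ := by
  refine eq_top_iff.2 fun f _ => ?_
  let coeHom := (reesAlgebra (coverIdeal K G)).val.restrictScalars K
  set T := Algebra.adjoin K (Set.range (reesVariable K G) ∪ Set.range (coverGenerator K G))
  suffices hf : (f : Polynomial (MvPolynomial (Fin n) K)) ∈ T.map coeHom by
    obtain ⟨x, hx, hxf⟩ := hf
    exact Subtype.ext hxf ▸ hx
  rw [Polynomial.as_sum_support (f : Polynomial (MvPolynomial (Fin n) K))]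
  refine sum_mem fun k _ => ?_
  rw [as_sum ((f : Polynomial (MvPolynomial (Fin n) K)).coeff k), map_sum]
  refine sum_mem fun m hm => ?_
  obtain ⟨x, hx, hxm⟩ := exists_mem_adjoin_coe_eq_monomial (K := K) hAB
    (isKCover_of_mem_coverIdeal_pow (f.2 k) hm)
  rw [← mul_one (coeff m _), ← smul_eq_mul, ← smul_monomial, ← Polynomial.smul_monomial, ← hxm]
  exact (T.map coeHom).smul_mem ⟨x, hx, rfl⟩ _

end ReesAlgebra

section Bounds

variable {K : Type*} [Field K] {n : ℕ} {G : SimpleGraph (Fin n)} {A B : Set (Fin n)}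

theorem coeff_aeval_coverGenerator {ι : Type*} {c : ι → {c : Set (Fin n) // G.IsVertexCover c}}
    (hinj : Function.Injective fun m : ι →₀ ℕ => (m.degree, coverExponent (fun s => (c s).1) m))
    (p : MvPolynomial ι K) (m : ι →₀ ℕ) :
    coeff (coverExponent (fun s => (c s).1) m)
      ((aeval (fun s => coverGenerator K G (c s)) p :
        Polynomial (MvPolynomial (Fin n) K)).coeff m.degree) = coeff m p := by
  classical
  induction p using MvPolynomial.induction_on' with
  | monomial m' a =>
    rw [← mul_one a, ← smul_eq_mul, ← smul_monomial, map_smul, Subalgebra.coe_smul,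
      coe_aeval_coverGenerator_monomial, Polynomial.coeff_smul, coeff_smul, coeff_smul,
      Polynomial.coeff_monomial, coeff_monomial]
    congr 1
    have := hinj.eq_iff (a := m') (b := m)
    rw [Prod.ext_iff] at this
    split_ifs <;> simp_all [coeff_monomial]
  | add p q hp hq => simp [hp, hq]

theorem IsTightFamily.card_le_ringKrullDim_ordinaryFiberCone {ι : Type*} [Fintype ι]
    {c : ι → {c : Set (Fin n) // G.IsVertexCover c}} (htight : IsTightFamily G fun s => (c s).1)
    (hinj : Function.Injective fun m : ι →₀ ℕ => (m.degree, coverExponent (fun s => (c s).1) m)) :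
    (Fintype.card ι : WithBot ℕ∞) ≤ ringKrullDim (ordinaryFiberCone K G) := by
  have hindep : AlgebraicIndependent K fun s =>
      Ideal.Quotient.mkₐ K (reesIrrelevantIdeal K G) (coverGenerator K G (c s)) := by
    refine algebraicIndependent_iff.2 fun p hp => MvPolynomial.ext _ _ fun m => ?_
    rw [← comp_aeval_apply, Ideal.Quotient.mkₐ_eq_mk, Ideal.Quotient.eq_zero_iff_mem] at hp
    rw [← coeff_aeval_coverGenerator hinj p m, coeff_zero]
    exact coeff_eq_zero_of_mem_reesIrrelevantIdeal hp
      (htight.minimal_isKCover (fun s => (c s).2) m)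
  exact card_le_ringKrullDim_of_algebraicIndependent
    (F := reesAlgebra (coverIdeal K G) ⧸ reesIrrelevantIdeal K G) hindep

theorem HasFreeParameterSet.add_one_le_ringKrullDim_ordinaryFiberCone (K : Type*) [Field K]
    {r : ℕ} (hr : HasFreeParameterSet G r) (hAB : G.IsBipartiteWith A B) :
    ((r + 1 : ℕ) : WithBot ℕ∞) ≤ ringKrullDim (ordinaryFiberCone K G) := by
  obtain ⟨a, b, hfree, haA⟩ := hr.exists_isFreeParameterPair_mem hAB
  obtain ⟨c, hc, htight, hinj⟩ := hfree.exists_isTightFamily_injective hAB haA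
  simpa using IsTightFamily.card_le_ringKrullDim_ordinaryFiberCone (K := K)
    (c := fun s => ⟨c s, hc s⟩) htight hinj

theorem aeval_coverGenerator_quotient_surjective (hAB : G.IsBipartiteWith A B)
    {P : Ideal (reesAlgebra (coverIdeal K G))} (hP : reesIrrelevantIdeal K G ≤ P) :
    Function.Surjective (aeval (R := K)
      fun c : {c : {c : Set (Fin n) // G.IsVertexCover c} // coverGenerator K G c ∉ P} =>
        Ideal.Quotient.mkₐ K P (coverGenerator K G c.1)) := by
  set ψ := aeval (R := K)
    fun c : {c : {c : Set (Fin n) // G.IsVertexCover c} // coverGenerator K G c ∉ P} =>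
      Ideal.Quotient.mkₐ K P (coverGenerator K G c.1)
  have htop : ψ.range.comap (Ideal.Quotient.mkₐ K P) = ⊤ := by
    rw [eq_top_iff, ← adjoin_reesVariable_union_coverGenerator_eq_top hAB, Algebra.adjoin_le_iff]
    rintro _ (⟨i, rfl⟩ | ⟨c, rfl⟩)
    · refine ⟨0, ?_⟩
      rw [map_zero]
      exact (Ideal.Quotient.eq_zero_iff_mem.2
        (hP (reesVariable_mem_reesIrrelevantIdeal K G i))).symm
    · by_cases hc : coverGenerator K G c ∈ P
      · exact ⟨0, (map_zero ψ).trans (Ideal.Quotient.eq_zero_iff_mem.2 hc).symm⟩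
      · exact ⟨X ⟨c, hc⟩, aeval_X _ _⟩
  intro y
  obtain ⟨x, rfl⟩ := Ideal.Quotient.mkₐ_surjective K P y
  exact (SetLike.ext_iff.1 htop x).2 trivial

theorem isTightFamily_of_coverGenerator_notMem (hAB : G.IsBipartiteWith A B)
    {P : Ideal (reesAlgebra (coverIdeal K G))} [P.IsPrime] (hP : reesIrrelevantIdeal K G ≤ P)
    {ι : Type*} [Finite ι] {c : ι → {c : Set (Fin n) // G.IsVertexCover c}}
    (hcP : ∀ s, coverGenerator K G (c s) ∉ P) : IsTightFamily G fun s => (c s).1 := by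
  have := Fintype.ofFinite ι
  let m : ι →₀ ℕ := Finsupp.equivFunOnFinite.symm 1
  have hprod : aeval (fun s => coverGenerator K G (c s)) (monomial m (1 : K)) ∉ P := by
    simpa [aeval_monomial, Finsupp.prod_fintype, m, Ideal.IsPrime.prod_mem_iff] using hcP
  refine isTightFamily_of_minimal_isKCover (fun s => (c s).2) (m := m) (fun _ => one_ne_zero) ?_
  by_contra hmin
  exact hprod (hP ((mem_reesIrrelevantIdeal_iff_not_minimal hAB
    (coe_aeval_coverGenerator_monomial c m)).2 hmin))

theorem IsTightFamily.ringKrullDim_quotient_le_gdim {ι : Type*} [Finite ι]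
    {c : ι → {c : Set (Fin n) // G.IsVertexCover c}} (htight : IsTightFamily G fun s => (c s).1)
    (hAB : G.IsBipartiteWith A B) {P : Ideal (reesAlgebra (coverIdeal K G))}
    (hsurj : Function.Surjective
      (aeval (R := K) fun s => Ideal.Quotient.mkₐ K P (coverGenerator K G (c s)))) :
    ringKrullDim (reesAlgebra (coverIdeal K G) ⧸ P) ≤ (gdim G : WithBot ℕ∞) := by
  obtain ⟨r, hr, u, hu⟩ :=
    htight.exists_hasFreeParameterSet_factorsThrough (fun s => (c s).2) hAB
  calc ringKrullDim (reesAlgebra (coverIdeal K G) ⧸ P)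
      ≤ Fintype.card (Option (Fin r)) :=
        ringKrullDim_quotient_le_card_of_factorsThrough hsurj u
          (factorsThrough_aeval_coverGenerator hu)
    _ = (r + 1 : ℕ) := by simp
    _ ≤ gdim G := mod_cast hr.add_one_le_gdim

theorem ringKrullDim_quotient_le_gdim (hAB : G.IsBipartiteWith A B)
    {P : Ideal (reesAlgebra (coverIdeal K G))} [P.IsPrime] (hP : reesIrrelevantIdeal K G ≤ P) :
    ringKrullDim (reesAlgebra (coverIdeal K G) ⧸ P) ≤ (gdim G : WithBot ℕ∞) := by
  have htight := isTightFamily_of_coverGenerator_notMem hAB hP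
    (c := (Subtype.val : {c // coverGenerator K G c ∉ P} → _)) Subtype.property
  exact htight.ringKrullDim_quotient_le_gdim hAB
    (aeval_coverGenerator_quotient_surjective hAB hP)

end Bounds

theorem analyticSpread_coverIdeal_eq_gdim_general (K : Type*) [Field K] {n : ℕ}
    (G : SimpleGraph (Fin n)) (hG : G.IsBipartite) :
    ringKrullDim (ordinaryFiberCone K G) = (gdim G : WithBot (WithTop ℕ)) := by
  obtain ⟨A, B, hAB⟩ := SimpleGraph.isBipartite_iff_exists_isBipartiteWith.1 hG
  obtain ⟨r, hr, hgdim⟩ := exists_hasFreeParameterSet_gdim_eq G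
  refine le_antisymm ?_ (hgdim ▸ hr.add_one_le_ringKrullDim_ordinaryFiberCone K hAB)
  exact ringKrullDim_quotient_le_of_forall_isPrime fun P _ hP =>
    ringKrullDim_quotient_le_gdim hAB hP

/-- Let `G` be a bipartite graph and `K` a field. The analytic spread of
the cover ideal — the Krull dimension of the ordinary fiber cone of `J(G)` — equals the
graphical dimension of `G`. -/
theorem analyticSpread_coverIdeal_eq_gdim (K : Type*) [Field K] {n : ℕ}
    (G : SimpleGraph (Fin n))
    (A : Finset (Fin n))
    (hbip : ∀ i j : Fin n, G.Adj i j → (i ∈ A ↔ j ∉ A))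
    (hiso : ∀ v : Fin n, ∃ w, G.Adj v w) :
    ringKrullDim (ordinaryFiberCone K G) = (gdim G : WithBot (WithTop ℕ)) := by
  refine analyticSpread_coverIdeal_eq_gdim_general K G
    (SimpleGraph.isBipartite_iff_exists_isBipartiteWith.2 ⟨A, Aᶜ, disjoint_compl_right, ?_⟩)
  grind
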